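/- arXiv:1209.1443 — 3 statements merged into one kernel-verified Lean document; each statement's English description precedes it below -/
import Mathlib

section
/- Let G be a group and a, b ∈ G such that the subgroup ⟨a, b⟩ generated by a and b is isomorphic to the free product ⟨a⟩_q * ⟨b⟩_r via the canonical map (i.e., the homomorphism from the free product C_q * C_r to G sending the two canonical generators to a and b respectively is injective), where 1 < q < ∞, r ∈ {2, ∞}, and if r = 2 then q = 2. Set A := (1 − a)(1 + (1 − a)b(Σ_{i=1}^q a^i)) and B := (1 − (1 − a)b(Σ_{i=1}^q a^i))(Σ_{i=1}^q a^i) in ℤ[G]. Then A ≠ 0, B ≠ 0, AB = 0, and the pair (A, B) is a nontrivial pair of zero-divisors in ℤ[G]. -/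
/-!
Let `q` be the order of `a`, `N = ∑ aⁱ` and `e = (1 - a) b N`. Since `N (1 - a) = 0`, we have
`e ^ 2 = 0`, hence `(1 - a)(1 + e) * (1 - e) N = (1 - a) N = 0`.

Let `H = ⟨a⟩`. All that matters about the free product is that `H` meets `bHb⁻¹` trivially. This
can be seen in the wreath product `C_q ≀ C_r`, where conjugation by a nontrivial element of `C_r`
moves the copy of `C_q` at the identity to another coordinate.

If the pair were trivial through some `h`, then either `h B = B` or `A h = A`.
* `B = N - q b N + q a b N` takes the values `1`, `-q`, `q` on the distinct cosets `H`, `bH`, `abH`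
  and vanishes elsewhere. If `h B = B`, then `h` fixes `H` and `bH`, so `h ∈ H ∩ bHb⁻¹ = 1`.
* `A = 1 - a + (b - 2 a b + a² b) N` takes the value `-1` at `a` only. If `A h = A`, then
  `a h = a` and `h = 1`.
-/

open MonoidAlgebra

/-- `A, B` is a trivial pair of zero-divisors in `ℤ[G]`: there are `X, Y ∈ ℤ[G]` and
`h ∈ G` of finite order `q > 1` such that either `A = X(1-h)`, `B = (1+h+⋯+h^{q-1})Y`,
or `A = X(1+h+⋯+h^{q-1})`, `B = (1-h)Y`. -/
def IsTrivialPairOfZeroDivisors {G : Type*} [Group G] (A B : MonoidAlgebra ℤ G) : Prop :=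
  ∃ (X Y : MonoidAlgebra ℤ G) (h : G) (q : ℕ), 1 < q ∧ orderOf h = q ∧
    ((A = X * (1 - of ℤ G h) ∧ B = (∑ i ∈ Finset.range q, of ℤ G h ^ i) * Y) ∨
     (A = X * (∑ i ∈ Finset.range q, of ℤ G h ^ i) ∧ B = (1 - of ℤ G h) * Y))

section FreeProduct

open scoped Pointwise

variable (D Q : Type*) [Group D] [Group Q]

open scoped Classical in
/-- The inclusion of `D` into the regular wreath product `D ≀ᵣ Q` as the factor of the base group
`Q → D` indexed by `1 : Q`. -/
noncomputable def wreathBaseHom : D →* D ≀ᵣ Q where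
  toFun x := ⟨Pi.mulSingle 1 x, 1⟩
  map_one' := by ext <;> simp
  map_mul' x y := by ext <;> simp [Pi.mulSingle_mul]

/-- The homomorphism from the free product to the wreath product that is the inclusion of the factor
at `1 : Q` on `D`, so that conjugation by `y : Q` moves the image of `D` to the factor at `y`. -/
noncomputable def coprodToWreath : Monoid.Coprod D Q →* D ≀ᵣ Q :=
  Monoid.Coprod.lift (wreathBaseHom D Q) RegularWreathProduct.inl

variable {D Q}

lemma coprodToWreath_inl_left_one (x : D) :
    (coprodToWreath D Q (Monoid.Coprod.inl x)).left 1 = x := by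
  simp [coprodToWreath, wreathBaseHom]

lemma coprodToWreath_conj_left_one (x : D) {y : Q} (hy : y ≠ 1) :
    (coprodToWreath D Q (MulAut.conj (Monoid.Coprod.inr y) (Monoid.Coprod.inl x))).left 1 = 1 := by
  simp [coprodToWreath, wreathBaseHom, hy]

lemma disjoint_range_inl_conj_range_inl {y : Q} (hy : y ≠ 1) :
    Disjoint (Monoid.Coprod.inl : D →* Monoid.Coprod D Q).range
      (MulAut.conj (Monoid.Coprod.inr y : Monoid.Coprod D Q) • Monoid.Coprod.inl.range) := by
  rw [Subgroup.disjoint_def]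
  rintro _ ⟨x, rfl⟩ ⟨_, ⟨x', rfl⟩, h⟩
  have hx : x = 1 := by
    rw [← coprodToWreath_inl_left_one (Q := Q) x, ← h]
    exact coprodToWreath_conj_left_one x' hy
  rw [hx, map_one]

variable {G : Type*} [Group G]

lemma map_conj_smul (f : D →* G) (x : D) (K : Subgroup D) :
    (MulAut.conj x • K).map f = MulAut.conj (f x) • K.map f := by
  simp only [Subgroup.pointwise_smul_def]
  ext
  simp

lemma disjoint_zpowers_conj_zpowers_of_coprod {ψ : Monoid.Coprod D Q →* G}
    (hψ : Function.Injective ψ) (x : D) {y : Q} (hy : y ≠ 1) :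
    Disjoint (Subgroup.zpowers (ψ (Monoid.Coprod.inl x)))
      (MulAut.conj (ψ (Monoid.Coprod.inr y)) • Subgroup.zpowers (ψ (Monoid.Coprod.inl x))) := by
  have hle : Subgroup.zpowers (Monoid.Coprod.inl x) ≤
      (Monoid.Coprod.inl : D →* Monoid.Coprod D Q).range :=
    Subgroup.zpowers_le.2 ⟨x, rfl⟩
  rw [← MonoidHom.map_zpowers, ← map_conj_smul]
  exact Subgroup.disjoint_map hψ <| (disjoint_range_inl_conj_range_inl hy).mono hle <|
    Subgroup.pointwise_smul_le_pointwise_smul_iff.2 hle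

lemma orderOf_coprod_inl_ofAdd_one {q : ℕ} {ψ : Monoid.Coprod (Multiplicative (ZMod q)) Q →* G}
    (hψ : Function.Injective ψ) :
    orderOf (ψ (Monoid.Coprod.inl (Multiplicative.ofAdd (1 : ZMod q)))) = q := by
  rw [orderOf_injective ψ hψ, orderOf_injective _ Monoid.Coprod.inl_injective,
    orderOf_ofAdd_eq_addOrderOf, ZMod.addOrderOf_one]

end FreeProduct

section Cosets

open scoped Pointwise

variable {G : Type*} [Group G]

lemma mk_mul_eq_mk_iff {H : Subgroup G} {x g : G} :
    ((x * g : G) : G ⧸ H) = g ↔ x ∈ MulAut.conj g • H := by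
  rw [eq_comm, QuotientGroup.eq, Subgroup.mem_pointwise_smul_iff_inv_smul_mem]
  simp [← map_inv, mul_assoc]

lemma mk_ne_mk_of_mem_of_notMem {H : Subgroup G} {g x : G} (hg : g ∈ H) (hx : x ∉ H) :
    (g : G ⧸ H) ≠ x := fun h =>
  hx <| (Subgroup.mul_mem_cancel_left _ (inv_mem hg)).1 (QuotientGroup.eq.1 h)

lemma notMem_zpowers_of_notMem_conj {a b : G} (hab : a ∉ MulAut.conj b • Subgroup.zpowers a) :
    b ∉ Subgroup.zpowers a := fun hb => by
  rw [Subgroup.conj_smul_eq_self_of_mem hb] at hab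
  exact hab (Subgroup.mem_zpowers a)

end Cosets

section GeometricSum

lemma sum_Icc_pow_of_pow_eq_one {R : Type*} [Semiring R] {u : R} {n : ℕ} (hu : u ^ n = 1) :
    ∑ i ∈ Finset.Icc 1 n, u ^ i = ∑ i ∈ Finset.range n, u ^ i := by
  cases n with
  | zero => rfl
  | succ m =>
    rw [← Finset.Ico_add_one_right_eq_Icc, Finset.sum_Ico_succ_top (by lia), hu,
      Finset.sum_range_succ', pow_zero, Finset.range_eq_Ico, Finset.sum_Ico_add' (u ^ ·) 0 m 1,
      zero_add]

variable {R : Type*} [Ring R]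

lemma one_sub_mul_geom_sum_of_pow_eq_one {u : R} {n : ℕ} (hu : u ^ n = 1) :
    (1 - u) * ∑ i ∈ Finset.range n, u ^ i = 0 := by
  rw [mul_neg_geom_sum, hu, sub_self]

lemma geom_sum_mul_one_sub_of_pow_eq_one {u : R} {n : ℕ} (hu : u ^ n = 1) :
    (∑ i ∈ Finset.range n, u ^ i) * (1 - u) = 0 := by
  rw [geom_sum_mul_neg, hu, sub_self]

lemma mul_eq_zero_of_annihilate {d N : R} (hdN : d * N = 0) (hNd : N * d = 0) (v : R) :
    d * (1 + d * v * N) * ((1 - d * v * N) * N) = 0 := by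
  have hsq : d * v * N * (d * v * N) = 0 := by
    rw [show d * v * N * (d * v * N) = d * v * (N * d) * v * N by noncomm_ring, hNd]
    simp
  calc d * (1 + d * v * N) * ((1 - d * v * N) * N)
      = d * N - d * (d * v * N * (d * v * N)) * N := by noncomm_ring
    _ = 0 := by rw [hdN, hsq, mul_zero, zero_mul, sub_zero]

end GeometricSum

section CyclicNorm

variable (R : Type*) [Semiring R] {G : Type*} [Group G] (a : G)

/-- The norm element of the cyclic subgroup generated by an element `a` of finite order, also
written `â`. It is `0` if `a` has infinite order, since then `orderOf a = 0`. -/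
noncomputable def cyclicNorm : MonoidAlgebra R G :=
  ∑ i ∈ Finset.Icc 1 (orderOf a), of R G a ^ i

lemma of_pow_orderOf : of R G a ^ orderOf a = 1 := by
  rw [← map_pow, pow_orderOf_eq_one, map_one]

lemma cyclicNorm_eq_sum_range :
    cyclicNorm R a = ∑ i ∈ Finset.range (orderOf a), of R G a ^ i :=
  sum_Icc_pow_of_pow_eq_one (of_pow_orderOf R a)

variable {R}

lemma coeff_of_mul (x g : G) (Z : MonoidAlgebra R G) :
    (of R G x * Z).coeff g = Z.coeff (x⁻¹ * g) := by
  rw [of_apply, coeff_single_mul_apply, one_mul]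

lemma coeff_mul_of (x g : G) (Z : MonoidAlgebra R G) :
    (Z * of R G x).coeff g = Z.coeff (g * x⁻¹) := by
  rw [of_apply, coeff_mul_single_apply, mul_one]

variable {a}

open scoped Classical in
lemma coeff_cyclicNorm (ha : IsOfFinOrder a) (g : G) :
    (cyclicNorm R a).coeff g = if g ∈ Subgroup.zpowers a then 1 else 0 := by
  have hinj : Set.InjOn (a ^ ·) (Finset.range (orderOf a) : Set ℕ) := by
    rw [Finset.coe_range]
    exact pow_injOn_Iio_orderOf
  have hsum : cyclicNorm R a = ∑ h ∈ (Finset.range (orderOf a)).image (a ^ ·), of R G h := by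
    simp only [cyclicNorm_eq_sum_range, Finset.sum_image hinj, map_pow]
  simp [hsum, ha.mem_zpowers_iff_mem_range_orderOf, Finsupp.single_apply,
    -Finset.sum_image, -Finset.mem_image]

open scoped Classical in
lemma coeff_of_mul_cyclicNorm (ha : IsOfFinOrder a) (x g : G) :
    (of R G x * cyclicNorm R a).coeff g =
      if (g : G ⧸ Subgroup.zpowers a) = x then 1 else 0 := by
  simp only [coeff_of_mul, coeff_cyclicNorm ha, eq_comm (b := (x : G ⧸ Subgroup.zpowers a)),
    QuotientGroup.eq]

end CyclicNorm

section ZeroDivisors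

variable (R : Type*) [Ring R] {G : Type*} [Group G] (a b : G)

lemma one_sub_of_mul_cyclicNorm : (1 - of R G a) * cyclicNorm R a = 0 := by
  rw [cyclicNorm_eq_sum_range, one_sub_mul_geom_sum_of_pow_eq_one (of_pow_orderOf R a)]

lemma cyclicNorm_mul_one_sub_of : cyclicNorm R a * (1 - of R G a) = 0 := by
  rw [cyclicNorm_eq_sum_range, geom_sum_mul_one_sub_of_pow_eq_one (of_pow_orderOf R a)]

lemma of_pow_mul_cyclicNorm (i : ℕ) : of R G a ^ i * cyclicNorm R a = cyclicNorm R a := by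
  have h : (1 - of R G a ^ i) * cyclicNorm R a = 0 := by
    rw [← geom_sum_mul_neg, mul_assoc, one_sub_of_mul_cyclicNorm, mul_zero]
  rw [sub_mul, one_mul, sub_eq_zero] at h
  exact h.symm

lemma cyclicNorm_mul_self : cyclicNorm R a * cyclicNorm R a = orderOf a • cyclicNorm R a := by
  nth_rw 1 [cyclicNorm]
  simp only [Finset.sum_mul, of_pow_mul_cyclicNorm, Finset.sum_const, Nat.card_Icc,
    Nat.add_sub_cancel]

/-- The factor `A = (1 - a)(1 + (1 - a)bâ)`. The unit `1 + (1 - a)bâ` is known as a bicyclic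
unit. -/
noncomputable def bicyclicLeft : MonoidAlgebra R G :=
  (1 - of R G a) * (1 + (1 - of R G a) * of R G b * cyclicNorm R a)

/-- The factor `B = (1 - (1 - a)bâ)â`, in which `1 - (1 - a)bâ` is the inverse of the bicyclic
unit of `bicyclicLeft`. -/
noncomputable def bicyclicRight : MonoidAlgebra R G :=
  (1 - (1 - of R G a) * of R G b * cyclicNorm R a) * cyclicNorm R a

lemma bicyclicLeft_mul_bicyclicRight : bicyclicLeft R a b * bicyclicRight R a b = 0 :=
  mul_eq_zero_of_annihilate (one_sub_of_mul_cyclicNorm R a) (cyclicNorm_mul_one_sub_of R a) _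

lemma bicyclicLeft_eq : bicyclicLeft R a b = of R G 1 - of R G a + (of R G b * cyclicNorm R a
    - 2 • (of R G (a * b) * cyclicNorm R a) + of R G (a * a * b) * cyclicNorm R a) := by
  simp only [bicyclicLeft, map_one, map_mul]
  noncomm_ring

lemma bicyclicRight_eq : bicyclicRight R a b = of R G 1 * cyclicNorm R a
    - orderOf a • (of R G b * cyclicNorm R a)
    + orderOf a • (of R G (a * b) * cyclicNorm R a) := by
  calc bicyclicRight R a b
      = cyclicNorm R a - (1 - of R G a) * of R G b * (cyclicNorm R a * cyclicNorm R a) := by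
        rw [bicyclicRight, sub_mul, one_mul, mul_assoc _ (cyclicNorm R a)]
    _ = _ := by
        rw [cyclicNorm_mul_self, mul_smul_comm, sub_mul, sub_mul, smul_sub, map_one, map_mul,
          one_mul, one_mul]
        abel

variable {R} {a}

open scoped Classical in
lemma coeff_bicyclicLeft (ha : IsOfFinOrder a) (g : G) :
    (bicyclicLeft R a b).coeff g = (if g = 1 then 1 else 0) - (if g = a then 1 else 0) +
      ((if (g : G ⧸ Subgroup.zpowers a) = b then 1 else 0)
        - 2 * (if (g : G ⧸ Subgroup.zpowers a) = (a * b : G) then 1 else 0)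
        + (if (g : G ⧸ Subgroup.zpowers a) = (a * a * b : G) then 1 else 0)) := by
  simp only [bicyclicLeft_eq, coeff_add, coeff_sub, coeff_smul, Finsupp.add_apply,
    Finsupp.sub_apply, Finsupp.smul_apply, coeff_of_mul_cyclicNorm ha]
  simp [Finsupp.single_apply, eq_comm (b := g)]

open scoped Classical in
lemma coeff_bicyclicRight (ha : IsOfFinOrder a) (g : G) :
    (bicyclicRight R a b).coeff g =
      (if (g : G ⧸ Subgroup.zpowers a) = (1 : G) then 1 else 0)
        - orderOf a * (if (g : G ⧸ Subgroup.zpowers a) = b then 1 else 0)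
        + orderOf a * (if (g : G ⧸ Subgroup.zpowers a) = (a * b : G) then 1 else 0) := by
  simp only [bicyclicRight_eq, coeff_add, coeff_sub, coeff_smul, Finsupp.add_apply,
    Finsupp.sub_apply, Finsupp.smul_apply, coeff_of_mul_cyclicNorm ha]
  simp only [nsmul_eq_mul]

open scoped Pointwise

variable {b}

lemma coeff_bicyclicLeft_eq_neg_one_iff (ha : IsOfFinOrder a)
    (hab : a ∉ MulAut.conj b • Subgroup.zpowers a) {g : G} :
    (bicyclicLeft ℤ a b).coeff g = -1 ↔ g = a := by
  have haH := Subgroup.mem_zpowers a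
  have hb := notMem_zpowers_of_notMem_conj hab
  rw [coeff_bicyclicLeft b ha]
  by_cases hg : g ∈ Subgroup.zpowers a
  · have ha1 : a ≠ 1 := fun h => hab (h ▸ one_mem _)
    rw [if_neg (mk_ne_mk_of_mem_of_notMem hg hb),
      if_neg (mk_ne_mk_of_mem_of_notMem hg (mt (Subgroup.mul_mem_cancel_left _ haH).1 hb)),
      if_neg (mk_ne_mk_of_mem_of_notMem hg
        (mt (Subgroup.mul_mem_cancel_left _ (mul_mem haH haH)).1 hb))]
    grind
  · have hg1 : g ≠ 1 := fun h => hg (h ▸ one_mem _)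
    have hga : g ≠ a := fun h => hg (h ▸ haH)
    have hbH : ((a * b : G) : G ⧸ Subgroup.zpowers a) ≠ b := mt mk_mul_eq_mk_iff.1 hab
    have habH : ((a * a * b : G) : G ⧸ Subgroup.zpowers a) ≠ (a * b : G) := by
      rw [mul_assoc]
      exact fun h => hbH (smul_left_cancel a h)
    -- the value `-2` on `abH` cannot be corrected to `-1` by overlap with `bH` or `a²bH`
    grind

lemma coeff_bicyclicRight_eq_one_iff (ha : IsOfFinOrder a)
    (hab : a ∉ MulAut.conj b • Subgroup.zpowers a) {g : G} :
    (bicyclicRight ℤ a b).coeff g = 1 ↔ (g : G ⧸ Subgroup.zpowers a) = (1 : G) := by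
  have hb := notMem_zpowers_of_notMem_conj hab
  have hbH := mk_ne_mk_of_mem_of_notMem (one_mem _) hb
  have habH := mk_ne_mk_of_mem_of_notMem (one_mem _)
    (mt (Subgroup.mul_mem_cancel_left _ (Subgroup.mem_zpowers a)).1 hb)
  have ha1 : orderOf a ≠ 1 := fun h => hab (orderOf_eq_one_iff.1 h ▸ one_mem _)
  rw [coeff_bicyclicRight b ha]
  grind

lemma coeff_bicyclicRight_eq_neg_orderOf_iff (ha : IsOfFinOrder a)
    (hab : a ∉ MulAut.conj b • Subgroup.zpowers a) {g : G} :
    (bicyclicRight ℤ a b).coeff g = -orderOf a ↔ (g : G ⧸ Subgroup.zpowers a) = b := by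
  have hb := notMem_zpowers_of_notMem_conj hab
  have hbH := mk_ne_mk_of_mem_of_notMem (one_mem _) hb
  have habH : ((a * b : G) : G ⧸ Subgroup.zpowers a) ≠ b := mt mk_mul_eq_mk_iff.1 hab
  have ha0 := ha.orderOf_pos
  rw [coeff_bicyclicRight b ha]
  grind

lemma eq_one_of_bicyclicLeft_mul_of_eq (ha : IsOfFinOrder a)
    (hab : a ∉ MulAut.conj b • Subgroup.zpowers a) {x : G}
    (hx : bicyclicLeft ℤ a b * of ℤ G x = bicyclicLeft ℤ a b) : x = 1 := by
  have h : (bicyclicLeft ℤ a b).coeff (a * x) = -1 := by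
    rw [← hx, coeff_mul_of, mul_inv_cancel_right]
    exact (coeff_bicyclicLeft_eq_neg_one_iff ha hab).2 rfl
  exact mul_eq_left.1 ((coeff_bicyclicLeft_eq_neg_one_iff ha hab).1 h)

lemma mem_zpowers_inf_conj_of_of_mul_bicyclicRight_eq (ha : IsOfFinOrder a)
    (hab : a ∉ MulAut.conj b • Subgroup.zpowers a) {x : G}
    (hx : of ℤ G x * bicyclicRight ℤ a b = bicyclicRight ℤ a b) :
    x ∈ Subgroup.zpowers a ⊓ MulAut.conj b • Subgroup.zpowers a := by
  have hcoeff (g : G) : (bicyclicRight ℤ a b).coeff (x * g) = (bicyclicRight ℤ a b).coeff g := by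
    nth_rw 1 [← hx]
    rw [coeff_of_mul, inv_mul_cancel_left]
  constructor
  · have h1 := (hcoeff 1).trans ((coeff_bicyclicRight_eq_one_iff ha hab).2 rfl)
    simpa using mk_mul_eq_mk_iff.1 ((coeff_bicyclicRight_eq_one_iff ha hab).1 h1)
  · have hb := (hcoeff b).trans ((coeff_bicyclicRight_eq_neg_orderOf_iff ha hab).2 rfl)
    exact mk_mul_eq_mk_iff.1 ((coeff_bicyclicRight_eq_neg_orderOf_iff ha hab).1 hb)

lemma IsTrivialPairOfZeroDivisors.exists_invariant {A B : MonoidAlgebra ℤ G}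
    (h : IsTrivialPairOfZeroDivisors A B) :
    ∃ x : G, x ≠ 1 ∧ (of ℤ G x * B = B ∨ A * of ℤ G x = A) := by
  obtain ⟨X, Y, x, _, hx, rfl, h⟩ := h
  refine ⟨x, mt orderOf_eq_one_iff.2 hx.ne', ?_⟩
  have hxn := of_pow_orderOf ℤ x
  rcases h with ⟨-, rfl⟩ | ⟨rfl, -⟩
  · left
    rw [eq_comm, ← sub_eq_zero, ← one_sub_mul, ← mul_assoc,
      one_sub_mul_geom_sum_of_pow_eq_one hxn, zero_mul]
  · right
    rw [eq_comm, ← sub_eq_zero, ← mul_one_sub, mul_assoc,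
      geom_sum_mul_one_sub_of_pow_eq_one hxn, mul_zero]

theorem free_product_nontrivial_pair_of_zero_divisors_general (ha : IsOfFinOrder a) (ha1 : a ≠ 1)
    (hdisj : Disjoint (Subgroup.zpowers a) (MulAut.conj b • Subgroup.zpowers a)) :
    bicyclicLeft ℤ a b ≠ 0 ∧ bicyclicRight ℤ a b ≠ 0 ∧
      bicyclicLeft ℤ a b * bicyclicRight ℤ a b = 0 ∧
      ¬ IsTrivialPairOfZeroDivisors (bicyclicLeft ℤ a b) (bicyclicRight ℤ a b) := by
  have hab : a ∉ MulAut.conj b • Subgroup.zpowers a := fun h =>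
    ha1 (Subgroup.disjoint_def.1 hdisj (Subgroup.mem_zpowers a) h)
  refine ⟨fun h0 => ?_, fun h0 => ?_, bicyclicLeft_mul_bicyclicRight ℤ a b, fun htriv => ?_⟩
  · simpa [h0] using (coeff_bicyclicLeft_eq_neg_one_iff ha hab).2 rfl
  · simpa [h0] using (coeff_bicyclicRight_eq_one_iff ha hab (g := 1)).2 rfl
  · obtain ⟨x, hx1, hx | hx⟩ := htriv.exists_invariant
    · exact hx1 <| Subgroup.mem_bot.1 <| hdisj.le_bot <|
        mem_zpowers_inf_conj_of_of_mul_bicyclicRight_eq ha hab hx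
    · exact hx1 (eq_one_of_bicyclicLeft_mul_of_eq ha hab hx)

end ZeroDivisors

/-- Lemma 3: suppose `⟨a, b⟩ ≤ G` is canonically isomorphic to the free
product `C_q * C_r` (i.e. the homomorphism from `C_q * C_r` sending the canonical
generators to `a` and `b` is injective), where `1 < q < ∞`, `r ∈ {2, ∞}` (here `r = 0`
encodes `∞`), and `q = 2` whenever `r = 2`. Then
`A := (1-a)(1 + (1-a)b(Σ_{i=1}^q a^i))` and `B := (1 - (1-a)b(Σ_{i=1}^q a^i))(Σ_{i=1}^q a^i)`
form a nontrivial pair of zero-divisors in `ℤ[G]`. -/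
theorem free_product_nontrivial_pair_of_zero_divisors {G : Type*} [Group G] (a b : G)
    (q r : ℕ) (hq : 1 < q) (hr : r = 2 ∨ r = 0) (hrq : r = 2 → q = 2)
    (ψ : Monoid.Coprod (Multiplicative (ZMod q)) (Multiplicative (ZMod r)) →* G)
    (hψa : ψ (Monoid.Coprod.inl (Multiplicative.ofAdd (1 : ZMod q))) = a)
    (hψb : ψ (Monoid.Coprod.inr (Multiplicative.ofAdd (1 : ZMod r))) = b)
    (hψ : Function.Injective ψ) :
    let A : MonoidAlgebra ℤ G :=
      (1 - of ℤ G a) * (1 + (1 - of ℤ G a) * of ℤ G b * ∑ i ∈ Finset.Icc 1 q, of ℤ G a ^ i)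
    let B : MonoidAlgebra ℤ G :=
      (1 - (1 - of ℤ G a) * of ℤ G b * ∑ i ∈ Finset.Icc 1 q, of ℤ G a ^ i) *
        ∑ i ∈ Finset.Icc 1 q, of ℤ G a ^ i
    A ≠ 0 ∧ B ≠ 0 ∧ A * B = 0 ∧ ¬ IsTrivialPairOfZeroDivisors A B := by
  obtain rfl : orderOf a = q := hψa ▸ orderOf_coprod_inl_ofAdd_one hψ
  have hb : Multiplicative.ofAdd (1 : ZMod r) ≠ 1 := by
    rcases hr with rfl | rfl <;> decide
  exact free_product_nontrivial_pair_of_zero_divisors_general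
    (orderOf_pos_iff.1 (by lia)) (by rintro rfl; simp at hq)
    (hψa ▸ hψb ▸ disjoint_zpowers_conj_zpowers_of_coprod hψ _ hb)
end

section
/- Let G be a group containing a finite subgroup H, and let h₁, h₂ ∈ H be such that the subgroup ⟨h₁, h₂⟩ generated by h₁ and h₂ is not cyclic. Then A := 2 − h₁ − h₂ ∈ ℤ[G] is a left zero-divisor (there exists B ∈ ℤ[G], B ≠ 0, with AB = 0), and for every B ∈ ℤ[G] with B ≠ 0 and AB = 0, the pair (A, B) is not a trivial pair of zero-divisors. -/
/-!
For a finite subgroup `K` with sum `Σ_K ∈ R[G]`, comparing coefficients at `1` shows that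
`A = 2 - h₁ - h₂` satisfies `A Σ_K = 0` exactly when `h₁, h₂ ∈ K`. This provides the annihilated
element, and it also rules out `A = X (1 - h)`: then `A Σ_⟨h⟩ = 0`, so `h₁, h₂ ∈ ⟨h⟩`. If
`A = X (1 + h + ⋯ + h^{q-1})`, then `A (1 - h) = 0`, so `A` has the same coefficient at `1` as
at `h ≠ 1`, where it is at most `0`; this forces `h₁ = h₂ = 1`.
-/

open MonoidAlgebra

/-- The sum in `R[G]` of the elements of a finite subgroup `K`, which left multiplication by
elements of `K` fixes. -/
noncomputable def subgroupSum (R : Type*) {G : Type*} [Semiring R] [Group G] (K : Subgroup G)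
    [Finite K] : MonoidAlgebra R G :=
  ∑ g ∈ (K : Set G).toFinite.toFinset, of R G g

section SubgroupSum

variable {R G : Type*} [Group G]

section Semiring

variable [Semiring R] (K : Subgroup G) [Finite K]

lemma coeff_subgroupSum (g : G) [Decidable (g ∈ K)] :
    (subgroupSum R K).coeff g = if g ∈ K then 1 else 0 := by
  classical
  simp [subgroupSum, Finsupp.single_apply]

lemma subgroupSum_ne_zero [Nontrivial R] : subgroupSum R K ≠ 0 := by
  classical
  intro h
  simpa [coeff_subgroupSum, one_mem] using congrArg (·.coeff 1) h

variable {K} in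
lemma of_mul_subgroupSum {g : G} (hg : g ∈ K) :
    of R G g * subgroupSum R K = subgroupSum R K := by
  classical
  ext x
  simp [coeff_subgroupSum, of_apply, K.mul_mem_cancel_left (inv_mem hg)]

end Semiring

lemma two_sub_of_sub_of_mul_subgroupSum_eq_zero_iff [Ring R] [NeZero (2 : R)]
    (K : Subgroup G) [Finite K] {h₁ h₂ : G} :
    (2 - of R G h₁ - of R G h₂) * subgroupSum R K = 0 ↔ h₁ ∈ K ∧ h₂ ∈ K := by
  classical
  have : Nontrivial R := nontrivial_of_ne 2 0 two_ne_zero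
  constructor
  · intro h
    have coeff_one : (2 : R) - (if h₁ ∈ K then 1 else 0) - (if h₂ ∈ K then 1 else 0) = 0 := by
      simpa [sub_mul, two_mul, one_add_one_eq_two, coeff_subgroupSum, one_mem]
        using congrArg (·.coeff 1) h
    have two_sub_one : (2 : R) - 1 = 1 := by norm_num
    split_ifs at coeff_one with m₁ m₂ <;> simp_all [two_ne_zero]
  · rintro ⟨m₁, m₂⟩
    rw [sub_mul, sub_mul, of_mul_subgroupSum m₁, of_mul_subgroupSum m₂, two_mul,
      add_sub_cancel_right, sub_self]

end SubgroupSum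

section Factors

variable {R G : Type*} [Ring R] [Group G] {h₁ h₂ h : G} {X : MonoidAlgebra R G}

lemma mem_zpowers_of_two_sub_of_sub_of_eq_mul_one_sub_of [NeZero (2 : R)] (hh : IsOfFinOrder h)
    (hA : 2 - of R G h₁ - of R G h₂ = X * (1 - of R G h)) :
    h₁ ∈ Subgroup.zpowers h ∧ h₂ ∈ Subgroup.zpowers h := by
  have : Finite (Subgroup.zpowers h) := hh.finite_zpowers
  rw [← two_sub_of_sub_of_mul_subgroupSum_eq_zero_iff (R := R), hA, mul_assoc, sub_mul, one_mul,
    of_mul_subgroupSum (Subgroup.mem_zpowers h), sub_self, mul_zero]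

lemma geom_sum_orderOf_mul_one_sub_of (h : G) :
    (∑ i ∈ Finset.range (orderOf h), of R G h ^ i) * (1 - of R G h) = 0 := by
  rw [geom_sum_mul_neg, ← map_pow, pow_orderOf_eq_one, map_one, sub_self]

lemma eq_one_of_two_sub_of_sub_of_mul_one_sub_of_eq_zero [CharZero R] (hne : h ≠ 1)
    (hA : (2 - of R G h₁ - of R G h₂) * (1 - of R G h) = 0) : h₁ = 1 ∧ h₂ = 1 := by
  classical
  have two_eq : (2 : MonoidAlgebra R G) = single 1 2 := rfl
  have coeff_h : 0 - (if h₁ = h then 1 else 0) - (if h₂ = h then 1 else 0) =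
      (2 : R) - (if h₁ = 1 then 1 else 0) - (if h₂ = 1 then 1 else 0) := by
    rw [mul_sub, mul_one, sub_eq_zero] at hA
    simpa [two_eq, of_apply, Finsupp.single_apply, hne.symm] using congrArg (·.coeff h) hA
  have coeff_h_int : 0 - (if h₁ = h then 1 else 0) - (if h₂ = h then 1 else 0) =
      (2 : ℤ) - (if h₁ = 1 then 1 else 0) - (if h₂ = 1 then 1 else 0) := by
    exact_mod_cast coeff_h
  grind

end Factors

lemma isCyclic_closure_pair_of_mem_zpowers {G : Type*} [Group G] {h₁ h₂ h : G}
    (m₁ : h₁ ∈ Subgroup.zpowers h) (m₂ : h₂ ∈ Subgroup.zpowers h) :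
    IsCyclic (Subgroup.closure ({h₁, h₂} : Set G)) :=
  Subgroup.isCyclic_of_le ((Subgroup.closure_le _).2 (Set.pair_subset m₁ m₂))

theorem two_sub_h₁_sub_h₂_nontrivial_zero_divisor_general {R G : Type*} [Ring R] [CharZero R]
    [Group G] {h₁ h₂ : G} (hnc : ¬ IsCyclic (Subgroup.closure ({h₁, h₂} : Set G))) :
    (Finite (Subgroup.closure ({h₁, h₂} : Set G)) →
      ∃ B : MonoidAlgebra R G, B ≠ 0 ∧ (2 - of R G h₁ - of R G h₂) * B = 0) ∧
    ∀ (X : MonoidAlgebra R G) (h : G), 1 < orderOf h →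
      2 - of R G h₁ - of R G h₂ ≠ X * (1 - of R G h) ∧
      2 - of R G h₁ - of R G h₂ ≠ X * ∑ i ∈ Finset.range (orderOf h), of R G h ^ i := by
  refine ⟨fun _ ↦ ?_, fun X h hh ↦ ⟨fun hA ↦ hnc ?_, fun hA ↦ hnc ?_⟩⟩
  · have mem_closure : h₁ ∈ Subgroup.closure {h₁, h₂} ∧ h₂ ∈ Subgroup.closure {h₁, h₂} :=
      ⟨Subgroup.mem_closure_of_mem (by simp), Subgroup.mem_closure_of_mem (by simp)⟩
    exact ⟨_, subgroupSum_ne_zero _,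
      (two_sub_of_sub_of_mul_subgroupSum_eq_zero_iff _).2 mem_closure⟩
  · have h_fin : IsOfFinOrder h := orderOf_pos_iff.1 (zero_lt_one.trans hh)
    obtain ⟨m₁, m₂⟩ := mem_zpowers_of_two_sub_of_sub_of_eq_mul_one_sub_of h_fin hA
    exact isCyclic_closure_pair_of_mem_zpowers m₁ m₂
  · have h_ne_one : h ≠ 1 := fun h_one ↦ hh.ne' (orderOf_eq_one_iff.2 h_one)
    have hA_mul : (2 - of R G h₁ - of R G h₂) * (1 - of R G h) = 0 := by
      rw [hA, mul_assoc, geom_sum_orderOf_mul_one_sub_of, mul_zero]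
    obtain ⟨rfl, rfl⟩ := eq_one_of_two_sub_of_sub_of_mul_one_sub_of_eq_zero h_ne_one hA_mul
    exact isCyclic_closure_pair_of_mem_zpowers (one_mem (Subgroup.zpowers 1)) (one_mem _)

/-- if `h₁, h₂` lie in a finite subgroup `H` of `G` and generate a noncyclic
subgroup, then `A := 2 - h₁ - h₂` is a left zero-divisor of `ℤ[G]` and is a nontrivial one:
no `B ≠ 0` with `A * B = 0` makes `(A, B)` a trivial pair of zero-divisors. -/
theorem two_sub_h₁_sub_h₂_nontrivial_zero_divisor {G : Type*} [Group G]
    (H : Subgroup G) (hHfin : Finite H) (h₁ h₂ : G) (h₁H : h₁ ∈ H) (h₂H : h₂ ∈ H)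
    (hnc : ¬ IsCyclic (Subgroup.closure ({h₁, h₂} : Set G))) :
    (∃ B : MonoidAlgebra ℤ G, B ≠ 0 ∧
      (2 - of ℤ G h₁ - of ℤ G h₂) * B = 0) ∧
    (∀ B : MonoidAlgebra ℤ G, B ≠ 0 → (2 - of ℤ G h₁ - of ℤ G h₂) * B = 0 →
      ¬ IsTrivialPairOfZeroDivisors (2 - of ℤ G h₁ - of ℤ G h₂) B) := by
  have closure_le : Subgroup.closure {h₁, h₂} ≤ H :=
    (Subgroup.closure_le _).2 (Set.pair_subset h₁H h₂H)
  obtain ⟨exists_B, not_factor⟩ := two_sub_h₁_sub_h₂_nontrivial_zero_divisor_general (R := ℤ) hnc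
  refine ⟨exists_B (Finite.Set.subset (H : Set G) closure_le), ?_⟩
  rintro B - - ⟨X, Y, h, _, hq, rfl, ⟨hA, -⟩ | ⟨hA, -⟩⟩
  exacts [(not_factor X h hq).1 hA, (not_factor X h hq).2 hA]
end

section
/- Let m ≥ 2 and let n > 1 be odd. In the free Burnside group B(m,n) with free generators a₁, …, a_m, the elements [a₁, a₂] := a₁a₂a₁⁻¹a₂⁻¹, a₂, and a₁a₂^i for each i = 0, 1, …, n−1 all have order exactly n; moreover a₁a₂a₁⁻¹ ∉ ⟨[a₁, a₂]⟩ and [a₁, a₂]^j a₁a₂a₁⁻¹ ∉ ⟨a₁a₂^i⟩ for all i, j ∈ {0, 1, …, n−1}. -/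
/-!
Every element of `B(m, n)` has order dividing `n`, so orders and non-memberships can be read off
from homomorphisms to groups of exponent dividing `n`. The exponent sums `B(m, n) → ℤ/n` settle
everything visible in the abelianization: `a₂` and `a₁a₂^i` each have an exponent sum equal to `1`;
the second exponent sum kills `[a₁, a₂]` but not `a₁a₂a₁⁻¹`; and the second minus `i` times the
first kills `a₁a₂^i` but not `[a₁, a₂]^j a₁a₂a₁⁻¹`. The commutator itself is detected in the
Heisenberg group over `ℤ/n`, where it becomes the central element `(0, 0, 1)` of order `n`; that
group has exponent dividing `n` because `n`, being odd, divides `n choose 2`.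
-/

/-- The free Burnside group `B(m, n)`: the quotient of the free group of rank `m` by the
normal subgroup generated by all `n`-th powers. -/
abbrev FreeBurnsideGroup (m n : ℕ) : Type :=
  FreeGroup (Fin m) ⧸ Subgroup.normalClosure {x : FreeGroup (Fin m) | ∃ y, y ^ n = x}

/-- The free generators of `B(m, n)`: images of the free generators of the free group. -/
def FreeBurnsideGroup.gen (m n : ℕ) (i : Fin m) : FreeBurnsideGroup m n :=
  QuotientGroup.mk (FreeGroup.of i)

open scoped commutatorElement

lemma notMem_zpowers_of_map_ne_one {G H : Type*} [Group G] [Group H] (φ : G →* H) {g h : G}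
    (hh : φ h = 1) (hg : φ g ≠ 1) : g ∉ Subgroup.zpowers h :=
  fun hmem ↦ hg (Subgroup.zpowers_le.2 (MonoidHom.mem_ker.2 hh) hmem)

lemma dvd_choose_two_of_odd {n : ℕ} (hn : Odd n) : n ∣ n.choose 2 := by
  obtain ⟨k, rfl⟩ := hn
  refine ⟨k, ?_⟩
  rw [Nat.choose_two_right, Nat.add_sub_cancel, mul_left_comm, Nat.mul_div_cancel_left _ two_pos]

/-- The Heisenberg group over `R`: the triple `(x, y, z)` stands for the upper unitriangular
matrix with `x`, `y` above the diagonal and `z` in the corner. -/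
@[ext]
structure HeisenbergGroup (R : Type*) where
  x : R
  y : R
  z : R

namespace HeisenbergGroup

variable {R : Type*} [CommRing R]

instance : Mul (HeisenbergGroup R) := ⟨fun a b ↦ ⟨a.x + b.x, a.y + b.y, a.z + b.z + a.x * b.y⟩⟩
instance : One (HeisenbergGroup R) := ⟨⟨0, 0, 0⟩⟩
instance : Inv (HeisenbergGroup R) := ⟨fun a ↦ ⟨-a.x, -a.y, -a.z + a.x * a.y⟩⟩

lemma mul_def (a b : HeisenbergGroup R) :
    a * b = ⟨a.x + b.x, a.y + b.y, a.z + b.z + a.x * b.y⟩ := rfl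

lemma one_def : (1 : HeisenbergGroup R) = ⟨0, 0, 0⟩ := rfl

lemma inv_def (a : HeisenbergGroup R) : a⁻¹ = ⟨-a.x, -a.y, -a.z + a.x * a.y⟩ := rfl

instance : Group (HeisenbergGroup R) :=
  Group.ofLeftAxioms
    (fun a b c ↦ by ext <;> simp only [mul_def] <;> ring)
    (fun a ↦ by ext <;> simp [mul_def, one_def])
    (fun a ↦ by ext <;> simp [mul_def, one_def, inv_def])

lemma pow_eq (a : HeisenbergGroup R) (k : ℕ) :
    a ^ k = ⟨k * a.x, k * a.y, k * a.z + k.choose 2 * (a.x * a.y)⟩ := by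
  induction k with
  | zero => simp [one_def]
  | succ k ih =>
    rw [pow_succ, ih, mul_def, Nat.choose_succ_succ' k 1, Nat.choose_one_right]
    ext <;> push_cast <;> ring

lemma commutatorElement_eq (a b : HeisenbergGroup R) : ⁅a, b⁆ = ⟨0, 0, a.x * b.y - b.x * a.y⟩ := by
  rw [commutatorElement_def]
  ext <;> simp only [mul_def, inv_def] <;> ring

lemma pow_eq_one_of_odd {n : ℕ} (hn : Odd n) (hR : (n : R) = 0) (a : HeisenbergGroup R) :
    a ^ n = 1 := by
  have choose_eq_zero : (n.choose 2 : R) = 0 := by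
    obtain ⟨k, hk⟩ := dvd_choose_two_of_odd hn
    rw [hk, Nat.cast_mul, hR, zero_mul]
  simp [pow_eq, one_def, hR, choose_eq_zero]

lemma orderOf_mk_zero_zero (z : R) : orderOf (⟨0, 0, z⟩ : HeisenbergGroup R) = addOrderOf z := by
  rw [← orderOf_ofAdd_eq_addOrderOf, orderOf_eq_orderOf_iff]
  intro k
  simp [pow_eq, one_def, ← ofAdd_nsmul]

end HeisenbergGroup

namespace FreeBurnsideGroup

variable {m n : ℕ}

lemma pow_eq_one (g : FreeBurnsideGroup m n) : g ^ n = 1 := by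
  induction g using QuotientGroup.induction_on with
  | H w =>
    rw [← QuotientGroup.mk_pow, QuotientGroup.eq_one_iff]
    exact Subgroup.subset_normalClosure ⟨w, rfl⟩

section Lift

variable {G : Type*} [Group G]

/-- The universal property of `B(m, n)`: a map from the generators to a group satisfying the law
`g ^ n = 1` extends to a homomorphism. -/
def lift (f : Fin m → G) (hG : ∀ g : G, g ^ n = 1) : FreeBurnsideGroup m n →* G :=
  QuotientGroup.lift _ (FreeGroup.lift f) <| Subgroup.normalClosure_le_normal <| by
    rintro _ ⟨w, rfl⟩
    simp [hG]

@[simp]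
lemma lift_gen (f : Fin m → G) (hG : ∀ g : G, g ^ n = 1) (i : Fin m) :
    lift f hG (gen m n i) = f i := by
  simp [lift, gen]

lemma orderOf_eq_of_orderOf_map_eq (φ : FreeBurnsideGroup m n →* G) {g : FreeBurnsideGroup m n}
    (h : orderOf (φ g) = n) : orderOf g = n :=
  Nat.dvd_antisymm (orderOf_dvd_of_pow_eq_one (pow_eq_one g))
    (h.symm.dvd.trans (orderOf_map_dvd φ g))

end Lift

/-- The exponent sum of the `i`-th generator modulo `n`, a coordinate of the abelianization of
`B(m, n)`. -/
def exponentSum (i : Fin m) : FreeBurnsideGroup m n →* Multiplicative (ZMod n) :=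
  lift (fun j ↦ .ofAdd ((Pi.single i 1 : Fin m → ZMod n) j)) fun g ↦ by
    rw [← ofAdd_toAdd g, ← ofAdd_nsmul]
    simp

@[simp]
lemma exponentSum_gen_self (i : Fin m) : exponentSum i (gen m n i) = .ofAdd 1 := by
  simp [exponentSum]

lemma exponentSum_gen_of_ne {i j : Fin m} (hij : i ≠ j) : exponentSum i (gen m n j) = 1 := by
  simp [exponentSum, hij.symm]

lemma exponentSum_commutator (i : Fin m) (g h : FreeBurnsideGroup m n) :
    exponentSum i ⁅g, h⁆ = 1 := by
  rw [map_commutatorElement, commutatorElement_eq_one_iff_commute]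
  exact Commute.all _ _

lemma exponentSum_conj (i : Fin m) (g h : FreeBurnsideGroup m n) :
    exponentSum i (g * h * g⁻¹) = exponentSum i h := by
  rw [map_mul, map_mul, map_inv, mul_inv_cancel_comm]

lemma orderOf_eq_of_exponentSum_eq {g : FreeBurnsideGroup m n} {i : Fin m}
    (h : exponentSum i g = .ofAdd 1) : orderOf g = n :=
  orderOf_eq_of_orderOf_map_eq (exponentSum i) <| by
    rw [h, orderOf_ofAdd_eq_addOrderOf, ZMod.addOrderOf_one]

lemma orderOf_gen_mul_gen_pow {i j : Fin m} (hij : i ≠ j) (k : ℕ) :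
    orderOf (gen m n i * gen m n j ^ k) = n :=
  orderOf_eq_of_exponentSum_eq (i := i) <| by simp [exponentSum_gen_of_ne hij]

lemma orderOf_commutator_gen (hn : Odd n) {i j : Fin m} (hij : i ≠ j) :
    orderOf ⁅gen m n i, gen m n j⁆ = n := by
  let φ : FreeBurnsideGroup m n →* HeisenbergGroup (ZMod n) :=
    lift (fun k ↦ ⟨(Pi.single i 1 : Fin m → ZMod n) k, (Pi.single j 1 : Fin m → ZMod n) k, 0⟩)
      (HeisenbergGroup.pow_eq_one_of_odd hn (ZMod.natCast_self n))
  have map_commutator : φ ⁅gen m n i, gen m n j⁆ = ⟨0, 0, 1⟩ := by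
    simp [φ, map_commutatorElement, HeisenbergGroup.commutatorElement_eq, hij]
  refine orderOf_eq_of_orderOf_map_eq φ ?_
  rw [map_commutator, HeisenbergGroup.orderOf_mk_zero_zero, ZMod.addOrderOf_one]

lemma notMem_zpowers_gen_mul_gen_pow {i j : Fin m} (hij : i ≠ j) {g : FreeBurnsideGroup m n}
    (hi : exponentSum i g = 1) (hj : exponentSum j g ≠ 1) (k : ℕ) :
    g ∉ Subgroup.zpowers (gen m n i * gen m n j ^ k) := by
  -- In additive notation this character is the `j`-th exponent sum minus `k` times the `i`-th.
  refine notMem_zpowers_of_map_ne_one (exponentSum j / exponentSum i ^ k) ?_ ?_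
  · simp [exponentSum_gen_of_ne hij, exponentSum_gen_of_ne hij.symm]
  · simpa [hi] using hj

end FreeBurnsideGroup

open FreeBurnsideGroup in
/-- for `m ≥ 2` and odd `n > 1`, in `B(m,n)` the elements
`[a₁,a₂]`, `a₂`, and `a₁a₂^i` (for `i = 0, …, n-1`) have order exactly `n`; moreover
`a₁a₂a₁⁻¹ ∉ ⟨[a₁,a₂]⟩` and `[a₁,a₂]^j a₁a₂a₁⁻¹ ∉ ⟨a₁a₂^i⟩` for all `i, j < n`. -/
theorem burnside_orders_and_nonmembership (m n : ℕ) (hm : 2 ≤ m) (hn : 1 < n)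
    (hodd : Odd n) :
    let a₁ : FreeBurnsideGroup m n := FreeBurnsideGroup.gen m n ⟨0, by omega⟩
    let a₂ : FreeBurnsideGroup m n := FreeBurnsideGroup.gen m n ⟨1, by omega⟩
    let c : FreeBurnsideGroup m n := a₁ * a₂ * a₁⁻¹ * a₂⁻¹
    orderOf c = n ∧ orderOf a₂ = n ∧ (∀ i < n, orderOf (a₁ * a₂ ^ i) = n) ∧
      a₁ * a₂ * a₁⁻¹ ∉ Subgroup.zpowers c ∧
      ∀ i < n, ∀ j < n,
        c ^ j * (a₁ * a₂ * a₁⁻¹) ∉ Subgroup.zpowers (a₁ * a₂ ^ i) := by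
  intro a₁ a₂ c
  have : Nontrivial (ZMod n) := ZMod.nontrivial_iff.2 hn.ne'
  have h₁₂ : (⟨0, by omega⟩ : Fin m) ≠ ⟨1, by omega⟩ := by simp
  have h₂ : exponentSum ⟨1, by omega⟩ a₂ ≠ 1 := by simp [a₂]
  have sum_c s : exponentSum s c = 1 := exponentSum_commutator s a₁ a₂
  have sum_pow_mul_conj j s : exponentSum s (c ^ j * (a₁ * a₂ * a₁⁻¹)) = exponentSum s a₂ := by
    rw [map_mul, map_pow, sum_c, one_pow, one_mul, exponentSum_conj]
  refine ⟨orderOf_commutator_gen hodd h₁₂, orderOf_eq_of_exponentSum_eq (exponentSum_gen_self _),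
    fun i _ ↦ orderOf_gen_mul_gen_pow h₁₂ i, ?_, fun i _ j _ ↦ ?_⟩
  · exact notMem_zpowers_of_map_ne_one (exponentSum ⟨1, by omega⟩) (sum_c _)
      ((exponentSum_conj _ _ _).trans_ne h₂)
  · exact notMem_zpowers_gen_mul_gen_pow h₁₂
      ((sum_pow_mul_conj j _).trans (exponentSum_gen_of_ne h₁₂))
      ((sum_pow_mul_conj j _).trans_ne h₂) i
end
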